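/- arXiv:2503.08312 — 2 statements merged into one kernel-verified Lean document; each statement's English description precedes it below -/
import Mathlib

section
/- Let (W', β) be a 6-dimensional symplectic space over GF(2) (β alternating and nondegenerate on W'), and let w_1, w_2, w_3 ∈ W' be linearly independent and pairwise orthogonal vectors. Then there exist 5-dimensional subspaces U', U'' ≤ W', each containing w_1, w_2, w_3 and each isometric to U, such that Rad(U') = span{w_1 + w_2} and Rad(U'') = span{w_2 + w_3}. Consequently W' contains two isometric copies of U whose radicals are distinct. -/
open Module Submodule

/-- A subspace `X` of `(V, βV)` is isometric to a subspace `Y` of `(W, βW)`: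
there is a linear isomorphism `X ≃ Y` carrying `βV` to `βW`. -/
def IsIsometricPair {V W : Type*} [AddCommGroup V] [Module (ZMod 2) V]
    [AddCommGroup W] [Module (ZMod 2) W]
    (βV : V →ₗ[ZMod 2] V →ₗ[ZMod 2] ZMod 2) (X : Submodule (ZMod 2) V)
    (βW : W →ₗ[ZMod 2] W →ₗ[ZMod 2] ZMod 2) (Y : Submodule (ZMod 2) W) : Prop :=
  ∃ f : X ≃ₗ[ZMod 2] Y, ∀ x y : X, βV (x : V) (y : V) = βW (f x : W) (f y : W)

/-- The radical of a subspace `X` with respect to the bilinear form `β`: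
`{x ∈ X | ∀ y ∈ X, β x y = 0}`. -/
def srad {W : Type*} [AddCommGroup W] [Module (ZMod 2) W]
    (β : W →ₗ[ZMod 2] W →ₗ[ZMod 2] ZMod 2) (X : Submodule (ZMod 2) W) :
    Submodule (ZMod 2) W :=
  X ⊓ (⨅ y ∈ X, LinearMap.ker (β.flip y))

/-!
Let `e, f` be hyperbolic pairs and `v = e 0 - e 1`. Replacing `e 0` by `v` and `f 1` by `f 0 + f 1`
gives hyperbolic pairs again, and `U` is spanned by the new vectors with `f 0`, the partner of `v`,
left out. Hence `U` is the hyperplane `v^⊥` of the span of the pairs: its radical is the line of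
`v`, and its isometry class does not depend on the pairs. It remains to complete `w₁, w₂, w₃` to
hyperbolic pairs and to read the result in the orders `w₁, w₂, w₃` and `w₂, w₃, w₁`.
-/

theorem exists_dual_family {ι K M : Type*} [Finite ι] [DecidableEq ι] [Field K] [AddCommGroup M]
    [Module K M] {φ : ι → M →ₗ[K] K} (hφ : LinearIndependent K φ) :
    ∃ g : ι → M, ∀ i j, φ i (g j) = if i = j then 1 else 0 := by
  have exists_apply_ne_zero (j : ι) : ∃ x, (∀ i ≠ j, φ i x = 0) ∧ φ j x ≠ 0 := by
    by_contra! h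
    refine hφ.notMem_span_image (s := {j}ᶜ) (x := j) (by simp) ?_
    rw [Set.image_eq_range]
    refine mem_span_of_iInf_ker_le_ker fun x hx => h x fun i hi => ?_
    exact (mem_iInf _).mp hx ⟨i, hi⟩
  choose x hx hx_ne using exists_apply_ne_zero
  refine ⟨fun j => (φ j (x j))⁻¹ • x j, fun i j => ?_⟩
  rcases eq_or_ne i j with rfl | hij
  · simp [hx_ne i]
  · simp [hij, hx j i hij]

theorem mem_srad {M : Type*} [AddCommGroup M] [Module (ZMod 2) M]
    {β : M →ₗ[ZMod 2] M →ₗ[ZMod 2] ZMod 2} {X : Submodule (ZMod 2) M} {x : M} :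
    x ∈ srad β X ↔ x ∈ X ∧ ∀ y ∈ X, β x y = 0 := by
  simp [srad]

theorem isIsometricPair_span_range {ι M N : Type*} [AddCommGroup M] [Module (ZMod 2) M]
    [AddCommGroup N] [Module (ZMod 2) N] {β : M →ₗ[ZMod 2] M →ₗ[ZMod 2] ZMod 2}
    {γ : N →ₗ[ZMod 2] N →ₗ[ZMod 2] ZMod 2} {u : ι → M} {v : ι → N}
    (hu : LinearIndependent (ZMod 2) u) (hv : LinearIndependent (ZMod 2) v)
    (h : ∀ i j, β (u i) (u j) = γ (v i) (v j)) :
    IsIsometricPair β (span (ZMod 2) (Set.range u)) γ (span (ZMod 2) (Set.range v)) := by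
  let g := (Basis.span hu).equiv (Basis.span hv) (Equiv.refl ι)
  have hg (i : ι) : (g (Basis.span hu i) : N) = v i := by
    rw [Basis.equiv_apply, Equiv.refl_apply, Basis.span_apply]
  suffices β.domRestrict₁₂ _ _ = (γ.domRestrict₁₂ _ _).compl₁₂ g.toLinearMap g.toLinearMap from
    ⟨g, LinearMap.congr_fun₂ this⟩
  refine LinearMap.ext_basis (Basis.span hu) (Basis.span hu) fun i j => ?_
  simp only [LinearMap.compl₁₂_apply, LinearMap.domRestrict₁₂_apply, LinearEquiv.coe_coe, hg]
  rw [Basis.span_apply, Basis.span_apply, h]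

/-- A family of mutually orthogonal hyperbolic pairs `(e i, f i)` of an alternating form `β`. -/
structure IsHyperbolicFamily {ι R M : Type*} [DecidableEq ι] [CommRing R] [AddCommGroup M]
    [Module R M] (β : M →ₗ[R] M →ₗ[R] R) (e f : ι → M) : Prop where
  isAlt : β.IsAlt
  left_left : ∀ i j, β (e i) (e j) = 0
  right_right : ∀ i j, β (f i) (f j) = 0
  left_right : ∀ i j, β (e i) (f j) = if i = j then 1 else 0

-- As in Gram–Schmidt: adding `β (g i) (g j) • e i` to `g j` for all `i < j` makes the dual vectors
-- `g` of `e` orthogonal to each other, and they stay dual to `e` because `e` is isotropic.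
theorem exists_isHyperbolicFamily {ι K M : Type*} [Finite ι] [DecidableEq ι] [Field K]
    [AddCommGroup M] [Module K M] {β : M →ₗ[K] M →ₗ[K] K} {e : ι → M} (hβ : β.IsAlt)
    (he : LinearIndependent K (β ∘ e)) (horth : ∀ i j, β (e i) (e j) = 0) :
    ∃ f, IsHyperbolicFamily β e f := by
  cases nonempty_fintype ι
  obtain ⟨_, -⟩ := exists_wellFoundedLT ι
  obtain ⟨g, hg⟩ : ∃ g : ι → M, ∀ i j, β (e i) (g j) = if i = j then 1 else 0 :=
    exists_dual_family he
  let f (j : ι) : M := g j + ∑ i with i < j, β (g i) (g j) • e i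
  have hef (i j : ι) : β (e i) (f j) = if i = j then 1 else 0 := by
    simpa [f, horth] using hg i j
  have hfe (i j : ι) : β (f i) (e j) = if i = j then -1 else 0 := by
    rw [← hβ.neg, hef]
    grind
  have hfg {i j : ι} (hij : i < j) : β (f i) (g j) = β (g i) (g j) := by
    have heg (k : ι) (hk : k < i) : β (e k) (g j) = 0 :=
      (hg k j).trans (if_neg (hk.trans hij).ne)
    simp +contextual [f, heg, Finset.sum_eq_zero]
  have hff_of_lt {i j : ι} (hij : i < j) : β (f i) (f j) = 0 := by
    calc
      β (f i) (f j) = β (f i) (g j) + ∑ k with k < j, β (g k) (g j) * β (f i) (e k) := by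
        rw [show f j = g j + _ from rfl]
        simp only [map_add, map_sum, map_smul, smul_eq_mul]
      _ = 0 := by simp [hfg hij, hfe, hij]
  refine ⟨f, hβ, horth, fun i j => ?_, hef⟩
  rcases lt_trichotomy i j with hij | rfl | hij
  · exact hff_of_lt hij
  · exact hβ (f i)
  · exact hβ.eq_iff.mp (hff_of_lt hij)

namespace IsHyperbolicFamily

variable {ι R M : Type*} [DecidableEq ι] [CommRing R] [AddCommGroup M] [Module R M]
  {β : M →ₗ[R] M →ₗ[R] R} {e f : ι → M}

theorem right_left (h : IsHyperbolicFamily β e f) (i j : ι) :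
    β (f i) (e j) = if i = j then -1 else 0 := by
  rw [← h.isAlt.neg, h.left_right]
  grind

theorem comp_injective {ι' : Type*} [DecidableEq ι'] (h : IsHyperbolicFamily β e f) {σ : ι' → ι}
    (hσ : Function.Injective σ) : IsHyperbolicFamily β (e ∘ σ) (f ∘ σ) where
  isAlt := h.isAlt
  left_left _ _ := h.left_left _ _
  right_right _ _ := h.right_right _ _
  left_right i j := by simp [h.left_right, hσ.eq_iff]

theorem transvection (h : IsHyperbolicFamily β e f) {i j : ι} (hij : i ≠ j) :
    IsHyperbolicFamily β (Function.update e i (e i - e j)) (Function.update f j (f i + f j)) where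
  isAlt := h.isAlt
  left_left k l := by
    simp only [Function.update_apply]
    split_ifs <;> simp [h.left_left]
  right_right k l := by
    simp only [Function.update_apply]
    split_ifs <;> simp [h.right_right]
  left_right k l := by
    simp only [Function.update_apply]
    split_ifs <;> simp only [map_sub, map_add, LinearMap.sub_apply, h.left_right] <;> grind

theorem linearIndependent (h : IsHyperbolicFamily β e f) :
    LinearIndependent R (Sum.elim e f) := by
  refine .of_pairwise_dual_eq_zero_one _ (Sum.elim (fun i => β.flip (f i)) fun i => β (e i)) ?_ ?_
  · rintro (i | i) (j | j) hij <;>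
      simp_all [h.left_left, h.right_right, h.left_right, eq_comm]
  · rintro (i | i) <;> simp [h.left_right]

theorem eq_sum_of_mem_span [Fintype ι] (h : IsHyperbolicFamily β e f) {x : M}
    (hx : x ∈ span R (Set.range (Sum.elim e f))) :
    x = ∑ i, β x (f i) • e i + ∑ i, β (e i) x • f i := by
  induction hx using span_induction with
  | mem x hx =>
    obtain ⟨i | i, rfl⟩ := hx <;> simp [h.left_left, h.right_right, h.left_right]
  | zero => simp
  | add x y _ _ hx hy =>
    nth_rw 1 [hx, hy]
    simp only [map_add, LinearMap.add_apply, add_smul, Finset.sum_add_distrib]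
    abel
  | smul c x _ hx =>
    nth_rw 1 [hx]
    simp only [map_smul, LinearMap.smul_apply, smul_add, Finset.smul_sum, smul_eq_mul, mul_smul]

theorem span_add_ne_span_add [Nontrivial R] (h : IsHyperbolicFamily β e f) {i j k : ι}
    (hij : i ≠ j) (hik : i ≠ k) : span R {e i + e j} ≠ span R {e j + e k} := by
  intro heq
  have hle : span R {e j + e k} ≤ LinearMap.ker (β.flip (f i)) := by
    simp [span_singleton_le_iff_mem, h.left_right, hij.symm, hik.symm]
  have hmem : β (e i + e j) (f i) = 0 := hle (heq ▸ mem_span_singleton_self _)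
  simp [h.left_right, hij.symm] at hmem

end IsHyperbolicFamily

/-- The family `(e, f)` of hyperbolic pairs with the single vector `f i₀` left out. It spans the
hyperplane orthogonal to `e i₀` in the span of the pairs. -/
def hyperplaneFamily {ι M : Type*} (e f : ι → M) (i₀ : ι) : ι ⊕ {i // i ≠ i₀} → M :=
  Sum.elim e fun i => f i

theorem range_hyperplaneFamily {ι M : Type*} (e f : ι → M) (i₀ : ι) :
    Set.range (hyperplaneFamily e f i₀) = Set.range e ∪ f '' {i₀}ᶜ := by
  rw [hyperplaneFamily, Set.Sum.elim_range, Set.image_eq_range]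
  rfl

namespace IsHyperbolicFamily

theorem linearIndependent_hyperplaneFamily {ι R M : Type*} [DecidableEq ι] [CommRing R]
    [AddCommGroup M] [Module R M] {β : M →ₗ[R] M →ₗ[R] R} {e f : ι → M}
    (h : IsHyperbolicFamily β e f) (i₀ : ι) : LinearIndependent R (hyperplaneFamily e f i₀) := by
  have hcomp : hyperplaneFamily e f i₀ = Sum.elim e f ∘ Sum.map id Subtype.val := by
    rw [Sum.elim_comp_map]
    rfl
  rw [hcomp]
  exact h.linearIndependent.comp _ (Function.injective_id.sumMap Subtype.val_injective)

variable {ι M : Type*} [DecidableEq ι] [AddCommGroup M] [Module (ZMod 2) M]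
  {β : M →ₗ[ZMod 2] M →ₗ[ZMod 2] ZMod 2} {e f : ι → M}

theorem srad_span_hyperplaneFamily [Finite ι] (h : IsHyperbolicFamily β e f) (i₀ : ι) :
    srad β (span (ZMod 2) (Set.range (hyperplaneFamily e f i₀))) = span (ZMod 2) {e i₀} := by
  cases nonempty_fintype ι
  set X := span (ZMod 2) (Set.range (hyperplaneFamily e f i₀))
  have he_mem (i : ι) : e i ∈ X := subset_span ⟨.inl i, rfl⟩
  have hf_mem {i : ι} (hi : i ≠ i₀) : f i ∈ X := subset_span ⟨.inr ⟨i, hi⟩, rfl⟩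
  have hX_le : X ≤ span (ZMod 2) (Set.range (Sum.elim e f)) := by
    rw [Set.Sum.elim_range]
    refine span_mono ?_
    rw [range_hyperplaneFamily]
    exact Set.union_subset_union_right _ (Set.image_subset_range f _)
  have hX_orth : X ≤ LinearMap.ker (β (e i₀)) := by
    rw [span_le]
    rintro _ ⟨i | ⟨i, hi⟩, rfl⟩
    · exact h.left_left i₀ i
    · exact (h.left_right i₀ i).trans (if_neg hi.symm)
  apply le_antisymm
  · intro x hx
    obtain ⟨hxX, hx_orth⟩ := mem_srad.mp hx
    have hex (i : ι) : β (e i) x = 0 := h.isAlt.eq_iff.mp (hx_orth _ (he_mem i))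
    have hxf (i : ι) (hi : i ≠ i₀) : β x (f i) = 0 := hx_orth _ (hf_mem hi)
    have hx_eq : x = β x (f i₀) • e i₀ := by
      calc
        x = ∑ i, β x (f i) • e i + ∑ i, β (e i) x • f i := h.eq_sum_of_mem_span (hX_le hxX)
        _ = ∑ i, β x (f i) • e i := by simp [hex]
        _ = β x (f i₀) • e i₀ :=
          Finset.sum_eq_single i₀ (fun i _ hi => by rw [hxf i hi, zero_smul]) (by simp)
    exact mem_span_singleton.mpr ⟨_, hx_eq.symm⟩
  · rw [span_singleton_le_iff_mem, mem_srad]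
    exact ⟨he_mem i₀, fun y hy => hX_orth hy⟩

theorem isIsometricPair_span_hyperplaneFamily (h : IsHyperbolicFamily β e f) {N : Type*}
    [AddCommGroup N] [Module (ZMod 2) N] {γ : N →ₗ[ZMod 2] N →ₗ[ZMod 2] ZMod 2} {e' f' : ι → N}
    (h' : IsHyperbolicFamily γ e' f') (i₀ : ι) :
    IsIsometricPair β (span (ZMod 2) (Set.range (hyperplaneFamily e f i₀)))
      γ (span (ZMod 2) (Set.range (hyperplaneFamily e' f' i₀))) := by
  refine isIsometricPair_span_range (h.linearIndependent_hyperplaneFamily i₀)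
    (h'.linearIndependent_hyperplaneFamily i₀) ?_
  rintro (i | i) (j | j) <;>
    simp [hyperplaneFamily, h.left_left, h'.left_left, h.right_right, h'.right_right,
      h.left_right, h'.left_right, h.right_left, h'.right_left]

end IsHyperbolicFamily

/-- The space `U` built on three hyperbolic pairs `(e i, f i)`. Indices start at `0`: `e i` and
`f i` are `e_{i+1}` and `e_{i+1}*` in the usual notation. -/
def modelU (R : Type*) {M : Type*} [Semiring R] [AddCommMonoid M] [Module R M] (e f : Fin 3 → M) :
    Submodule R M :=
  span R {e 0, e 1, e 2, f 0 + f 1, f 2}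

theorem left_mem_modelU (R : Type*) {M : Type*} [Semiring R] [AddCommMonoid M] [Module R M]
    (e f : Fin 3 → M) (i : Fin 3) : e i ∈ modelU R e f :=
  subset_span (by fin_cases i <;> simp)

theorem modelU_eq_span_hyperplaneFamily (R : Type*) {M : Type*} [Ring R] [AddCommGroup M]
    [Module R M] (e f : Fin 3 → M) :
    modelU R e f = span R (Set.range (hyperplaneFamily (Function.update e 0 (e 0 - e 1))
      (Function.update f 1 (f 0 + f 1)) 0)) := by
  have hrange : Set.range (hyperplaneFamily (Function.update e 0 (e 0 - e 1))
      (Function.update f 1 (f 0 + f 1)) 0) = {e 0 - e 1, e 1, e 2, f 0 + f 1, f 2} := by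
    ext x
    simp only [Set.mem_range, hyperplaneFamily, Sum.exists, Sum.elim_inl, Sum.elim_inr,
      Subtype.exists, Fin.exists_fin_succ, Fin.exists_fin_zero]
    simp [or_assoc, eq_comm]
  set S : Set M := {e 0 - e 1, e 1, e 2, f 0 + f 1, f 2}
  have hS {x : M} (hx : x ∈ S) : x ∈ span R S := subset_span hx
  have he₀ : e 0 ∈ span R S := by
    simpa using add_mem (hS (x := e 0 - e 1) (by simp [S])) (hS (x := e 1) (by simp [S]))
  have hv : e 0 - e 1 ∈ modelU R e f :=
    sub_mem (left_mem_modelU R e f 0) (left_mem_modelU R e f 1)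
  rw [hrange]
  apply le_antisymm
  · rw [modelU, span_le]
    rintro _ (rfl | hx)
    · exact he₀
    · exact hS (Set.mem_insert_of_mem _ hx)
  · rw [span_le]
    rintro _ (rfl | hx)
    · exact hv
    · exact subset_span (Set.mem_insert_of_mem _ hx)

namespace IsHyperbolicFamily

theorem finrank_modelU {R M : Type*} [CommRing R] [Nontrivial R] [AddCommGroup M] [Module R M]
    {β : M →ₗ[R] M →ₗ[R] R} {e f : Fin 3 → M} (h : IsHyperbolicFamily β e f) :
    finrank R (modelU R e f) = 5 := by
  rw [modelU_eq_span_hyperplaneFamily]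
  simpa using finrank_span_eq_card
    ((h.transvection zero_ne_one).linearIndependent_hyperplaneFamily 0)

variable {M : Type*} [AddCommGroup M] [Module (ZMod 2) M]
  {β : M →ₗ[ZMod 2] M →ₗ[ZMod 2] ZMod 2} {e f : Fin 3 → M}

theorem srad_modelU (h : IsHyperbolicFamily β e f) :
    srad β (modelU (ZMod 2) e f) = span (ZMod 2) {e 0 + e 1} := by
  rw [modelU_eq_span_hyperplaneFamily, (h.transvection zero_ne_one).srad_span_hyperplaneFamily,
    Function.update_self, ZModModule.sub_eq_add]

theorem isIsometricPair_modelU (h : IsHyperbolicFamily β e f) {N : Type*}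
    [AddCommGroup N] [Module (ZMod 2) N] {γ : N →ₗ[ZMod 2] N →ₗ[ZMod 2] ZMod 2}
    {e' f' : Fin 3 → N} (h' : IsHyperbolicFamily γ e' f') :
    IsIsometricPair β (modelU (ZMod 2) e f) γ (modelU (ZMod 2) e' f') := by
  simp only [modelU_eq_span_hyperplaneFamily]
  exact (h.transvection zero_ne_one).isIsometricPair_span_hyperplaneFamily
    (h'.transvection zero_ne_one) 0

end IsHyperbolicFamily

theorem two_copies_of_U_with_distinct_radicals_general {V W : Type*}
    [AddCommGroup V] [Module (ZMod 2) V] [AddCommGroup W] [Module (ZMod 2) W]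
    {β : V →ₗ[ZMod 2] V →ₗ[ZMod 2] ZMod 2} {e f : Fin 3 → V} (hV : IsHyperbolicFamily β e f)
    {βW : W →ₗ[ZMod 2] W →ₗ[ZMod 2] ZMod 2} (haltW : βW.IsAlt) {w₁ w₂ w₃ : W}
    (hli : LinearIndependent (ZMod 2) (βW ∘ ![w₁, w₂, w₃]))
    (h12 : βW w₁ w₂ = 0) (h13 : βW w₁ w₃ = 0) (h23 : βW w₂ w₃ = 0) :
    ∃ U' U'' : Submodule (ZMod 2) W,
      finrank (ZMod 2) U' = 5 ∧ finrank (ZMod 2) U'' = 5 ∧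
      w₁ ∈ U' ∧ w₂ ∈ U' ∧ w₃ ∈ U' ∧
      w₁ ∈ U'' ∧ w₂ ∈ U'' ∧ w₃ ∈ U'' ∧
      IsIsometricPair βW U' β (span (ZMod 2) {e 0, e 1, e 2, f 0 + f 1, f 2}) ∧
      IsIsometricPair βW U'' β (span (ZMod 2) {e 0, e 1, e 2, f 0 + f 1, f 2}) ∧
      srad βW U' = span (ZMod 2) {w₁ + w₂} ∧
      srad βW U'' = span (ZMod 2) {w₂ + w₃} ∧
      srad βW U' ≠ srad βW U'' := by
  have horth : ∀ i j, βW (![w₁, w₂, w₃] i) (![w₁, w₂, w₃] j) = 0 := by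
    simp [Fin.forall_fin_succ, haltW.self_eq_zero, h12, h13, h23, haltW.eq_iff.mp h12,
      haltW.eq_iff.mp h13, haltW.eq_iff.mp h23]
  obtain ⟨g, hW⟩ := exists_isHyperbolicFamily haltW hli horth
  have hW' := hW.comp_injective (finRotate 3).injective
  have hrad : srad βW (modelU _ _ _) = span (ZMod 2) {w₁ + w₂} := hW.srad_modelU
  have hrad' : srad βW (modelU _ _ _) = span (ZMod 2) {w₂ + w₃} := hW'.srad_modelU
  have hne : span (ZMod 2) {w₁ + w₂} ≠ span (ZMod 2) {w₂ + w₃} :=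
    hW.span_add_ne_span_add (i := 0) (j := 1) (k := 2) (by decide) (by decide)
  have hmem := left_mem_modelU (ZMod 2) ![w₁, w₂, w₃] g
  have hmem' := left_mem_modelU (ZMod 2) (![w₁, w₂, w₃] ∘ finRotate 3) (g ∘ finRotate 3)
  exact ⟨_, _, hW.finrank_modelU, hW'.finrank_modelU, hmem 0, hmem 1, hmem 2,
    hmem' 2, hmem' 0, hmem' 1, hW.isIsometricPair_modelU hV, hW'.isIsometricPair_modelU hV,
    hrad, hrad', hrad.trans_ne (hne.trans_eq hrad'.symm)⟩

/-- In a 6-dimensional symplectic space `(W, βW)` over `GF(2)`, for any linearly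
independent pairwise orthogonal `w₁, w₂, w₃` there are two 5-dimensional subspaces
containing `w₁, w₂, w₃`, both isometric to the 5-dimensional space
`U = span{e₁, e₂, e₃, e₁* + e₂*, e₃*}` (sitting in a symplectic space `V` with hyperbolic
basis `e_i = b (i, false)`, `e_i* = b (i, true)`), whose radicals are `span{w₁ + w₂}` and
`span{w₂ + w₃}` respectively; in particular their radicals are distinct. -/
theorem two_copies_of_U_with_distinct_radicals
    (V : Type*) [AddCommGroup V] [Module (ZMod 2) V]
    (β : V →ₗ[ZMod 2] V →ₗ[ZMod 2] ZMod 2)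
    (b : Basis (ℕ × Bool) (ZMod 2) V)
    (halt : ∀ v : V, β v v = 0)
    (hef : ∀ i j : ℕ, β (b (i, false)) (b (j, true)) = if i = j then 1 else 0)
    (hee : ∀ i j : ℕ, β (b (i, false)) (b (j, false)) = 0)
    (hff : ∀ i j : ℕ, β (b (i, true)) (b (j, true)) = 0)
    (W : Type*) [AddCommGroup W] [Module (ZMod 2) W]
    (βW : W →ₗ[ZMod 2] W →ₗ[ZMod 2] ZMod 2)
    (haltW : ∀ w : W, βW w w = 0)
    (hnd : LinearMap.ker βW = ⊥)
    (hdimW : finrank (ZMod 2) W = 6)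
    (w₁ w₂ w₃ : W)
    (hli : LinearIndependent (ZMod 2) ![w₁, w₂, w₃])
    (h12 : βW w₁ w₂ = 0) (h13 : βW w₁ w₃ = 0) (h23 : βW w₂ w₃ = 0) :
    ∃ U' U'' : Submodule (ZMod 2) W,
      finrank (ZMod 2) U' = 5 ∧ finrank (ZMod 2) U'' = 5 ∧
      w₁ ∈ U' ∧ w₂ ∈ U' ∧ w₃ ∈ U' ∧
      w₁ ∈ U'' ∧ w₂ ∈ U'' ∧ w₃ ∈ U'' ∧
      IsIsometricPair βW U' β
        (span (ZMod 2) ({b (1, false), b (2, false), b (3, false),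
          b (1, true) + b (2, true), b (3, true)} : Set V)) ∧
      IsIsometricPair βW U'' β
        (span (ZMod 2) ({b (1, false), b (2, false), b (3, false),
          b (1, true) + b (2, true), b (3, true)} : Set V)) ∧
      srad βW U' = span (ZMod 2) ({w₁ + w₂} : Set W) ∧
      srad βW U'' = span (ZMod 2) ({w₂ + w₃} : Set W) ∧
      srad βW U' ≠ srad βW U'' := by
  have hV : IsHyperbolicFamily β (fun i => b (i, false)) (fun i => b (i, true)) :=
    ⟨halt, hee, hff, hef⟩
  exact two_copies_of_U_with_distinct_radicals_general
    (hV.comp_injective (σ := fun i : Fin 3 => i + 1) fun i j hij => by grind) haltW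
    (hli.map' βW hnd) h12 h13 h23
end

section
/- Let V be a vector space over GF(2) of countably infinite dimension and A1 a finite-dimensional subspace of V. Then the family of all finite-dimensional subspaces of V that contain A1 has the Ramsey property: for all finite-dimensional subspaces A, B with A1 ≤ A ≤ B ≤ V and every r ∈ ℕ, there exists a finite-dimensional subspace C with A1 ≤ C ≤ V such that for every coloring ξ : {U : A1 ≤ U ≤ C, dim U = dim A} → {0, ..., r−1} there exists a subspace B' with A1 ≤ B' ≤ C and dim B' = dim B such that ξ is constant on the set {U : A1 ≤ U ≤ B', dim U = dim A}. -/
open Module Submodule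

/-!
The quotient by `A1` turns the subspaces containing `A1` into all subspaces of `V ⧸ A1`, lowering
dimensions by `dim A1`, so it suffices to prove the vector space Ramsey theorem of Graham, Leeb and
Rothschild: for every finite coloring of the `k`-dimensional subspaces of a large finite vector
space there is a monochromatic subspace of prescribed dimension.

A subspace of `D × K` that does not contain the line `0 × K` is the graph of a functional on a
subspace of `D`, and every such functional extends to `D`. By the Hales-Jewett theorem with the dual
of `D` as alphabet, `D × K` embeds in a large space in such a way that the color of a graph depends
only on its projection to `D`; the remaining subspaces are the products `T × K`. By induction on `k`
we may assume that the products with `dim T = k` all have one color `i`. If the graphs over some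
subspace `S` of `D` have color `i` as well, then `S × K` is monochromatic and its dimension exceeds
that of `S` by one. This is exploited by letting the prescribed dimension depend on the color: an
inner induction on the vector of these dimensions closes the argument.
-/

section Ring

variable {R M N κ : Type*} [Ring R] [AddCommGroup M] [Module R M] [AddCommGroup N] [Module R N]

theorem finrank_map_of_injective {φ : M →ₗ[R] N} (hφ : Function.Injective φ) (S : Submodule R M) :
    finrank R (S.map φ) = finrank R S :=
  (S.equivMapOfInjective φ hφ).finrank_eq.symm

theorem map_fst_prod_top_of_le {U : Submodule R (M × N)} (hU : (⊥ : Submodule R M).prod ⊤ ≤ U) :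
    (U.map (LinearMap.fst R M N)).prod ⊤ = U := by
  refine le_antisymm ?_ fun u hu ↦ ⟨⟨u, hu, rfl⟩, mem_top⟩
  rintro ⟨x, y⟩ ⟨⟨u, hu, rfl : u.1 = x⟩, -⟩
  have hline : (0, y - u.2) ∈ U := hU ⟨zero_mem _, mem_top⟩
  rw [show (u.1, y) = u + (0, y - u.2) by ext <;> simp]
  exact add_mem hu hline

/-- All submodules of `S` of rank `k` have color `i`. The coloring `c` is defined on all submodules,
but its values on those of other ranks play no role. -/
def IsMonochromatic (c : Submodule R M → κ) (k : ℕ) (i : κ) (S : Submodule R M) : Prop :=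
  ∀ U ≤ S, finrank R U = k → c U = i

theorem IsMonochromatic.map {c : Submodule R N → κ} {k : ℕ} {i : κ} {S : Submodule R M}
    {φ : M →ₗ[R] N} (hφ : Function.Injective φ)
    (hS : IsMonochromatic (fun T ↦ c (T.map φ)) k i S) : IsMonochromatic c k i (S.map φ) := by
  intro U hUS hUk
  have hU : (U.comap φ).map φ = U := map_comap_eq_of_le (hUS.trans LinearMap.map_le_range)
  rw [← hU] at hUS hUk ⊢
  exact hS _ ((map_le_map_iff_of_injective hφ _ _).mp hUS)
    ((finrank_map_of_injective hφ _).symm.trans hUk)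

/-- The off-diagonal partition relation `M ⟶ (f i)ᵏ`: for every coloring of the submodules of `M`
of rank `k`, some color `i` admits a monochromatic submodule of rank `f i`. -/
def RamseyArrow (R M : Type*) [Ring R] [AddCommGroup M] [Module R M] (k : ℕ) (f : κ → ℕ) : Prop :=
  ∀ c : Submodule R M → κ, ∃ i, ∃ S : Submodule R M, finrank R S = f i ∧ IsMonochromatic c k i S

theorem RamseyArrow.exists_le_range {k : ℕ} {f : κ → ℕ} (h : RamseyArrow R M k f)
    {φ : M →ₗ[R] N} (hφ : Function.Injective φ) (c : Submodule R N → κ) :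
    ∃ i, ∃ S ≤ LinearMap.range φ, finrank R S = f i ∧ IsMonochromatic c k i S := by
  obtain ⟨i, S, hSf, hS⟩ := h fun T ↦ c (T.map φ)
  exact ⟨i, S.map φ, LinearMap.map_le_range, (finrank_map_of_injective hφ S).trans hSf, hS.map hφ⟩

theorem RamseyArrow.of_injective {k : ℕ} {f : κ → ℕ} (h : RamseyArrow R M k f)
    {φ : M →ₗ[R] N} (hφ : Function.Injective φ) : RamseyArrow R N k f := fun c ↦
  let ⟨i, S, _, hS⟩ := h.exists_le_range hφ c
  ⟨i, S, hS⟩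

/-- A coloring of the submodules of `M × R` is graph invariant if the graph of a functional over a
submodule `T` of `M` always has the same color as `T × 0`. The functionals are defined on all of
`M` and then restricted to `T`. -/
def IsGraphInvariant (c : Submodule R (M × R) → κ) : Prop :=
  ∀ (g : M →ₗ[R] R) (T : Submodule R M),
    c (T.map (LinearMap.id.prod g)) = c (T.map (LinearMap.inl R M R))

/-- The embedding of `M × R` in `M × (ι → R)` attached to a combinatorial line `l` in the words over
the dual of `M`: the fixed letters of `l` are applied to the first component, and the second
component is copied to the moving coordinates. Thus the graph of `g` is sent to the graph of the
word `l g`. -/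
def lineEmbedding {ι : Type*} (l : Combinatorics.Line (M →ₗ[R] R) ι) :
    M × R →ₗ[R] M × (ι → R) :=
  (LinearMap.fst R M R).prod <| LinearMap.pi fun j ↦
    (l.idxFun j).elim (LinearMap.snd R M R) (· ∘ₗ LinearMap.fst R M R)

theorem lineEmbedding_comp_id_prod {ι : Type*} (l : Combinatorics.Line (M →ₗ[R] R) ι)
    (g : M →ₗ[R] R) :
    lineEmbedding l ∘ₗ LinearMap.id.prod g = LinearMap.id.prod (LinearMap.pi (l g)) := by
  ext x j
  · rfl
  · cases h : l.idxFun j <;> simp [lineEmbedding, h]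

theorem lineEmbedding_injective {ι : Type*} (l : Combinatorics.Line (M →ₗ[R] R) ι) :
    Function.Injective (lineEmbedding l) := by
  rintro ⟨x, a⟩ ⟨y, b⟩ h
  obtain ⟨j, hj⟩ := l.proper
  have hxy : x = y := congrArg Prod.fst h
  have hab : a = b := by
    simpa [lineEmbedding, hj] using congrFun (congrArg Prod.snd h) j
  rw [hxy, hab]

theorem exists_isGraphInvariant (R M κ : Type*) [Ring R] [AddCommGroup M] [Module R M] [Finite R]
    [Finite M] [Finite κ] :
    ∃ (ι : Type) (_ : Fintype ι), ∀ c : Submodule R (M × (ι → R)) → κ,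
      ∃ φ : M × R →ₗ[R] M × (ι → R), Function.Injective φ ∧
        IsGraphInvariant fun U ↦ c (U.map φ) := by
  have : Finite (M →ₗ[R] R) := DFunLike.finite _
  obtain ⟨ι, hι, hmono⟩ :=
    Combinatorics.Line.exists_mono_in_high_dimension (M →ₗ[R] R) (Submodule R M → κ)
  refine ⟨ι, hι, fun c ↦ ?_⟩
  -- A word over the dual is a map `M → (ι → R)`; its color records the colors of all its graphs.
  obtain ⟨l, color, hl⟩ := hmono fun w T ↦ c (T.map (LinearMap.id.prod (LinearMap.pi w)))
  have hgraph (g : M →ₗ[R] R) (T : Submodule R M) :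
      c ((T.map (LinearMap.id.prod g)).map (lineEmbedding l)) = color T := by
    rw [← Submodule.map_comp, lineEmbedding_comp_id_prod]
    exact congrFun (hl g) T
  exact ⟨lineEmbedding l, lineEmbedding_injective l, fun g T ↦
    (hgraph g T).trans (hgraph 0 T).symm⟩

end Ring

section DivisionRing

variable {K V W κ : Type*} [DivisionRing K] [AddCommGroup V] [Module K V] [AddCommGroup W]
  [Module K W]

theorem exists_eq_map_id_prod {U : Submodule K (V × W)} (hU : ∀ y, (0, y) ∈ U → y = 0) :
    ∃ g : V →ₗ[K] W, U = (U.map (LinearMap.fst K V W)).map (LinearMap.id.prod g) := by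
  have hU' : ∀ u ∈ U, u.1 = 0 → u.2 = 0 := by
    rintro ⟨_, y⟩ hy rfl
    exact hU y hy
  obtain ⟨g, hg⟩ := U.toLinearPMap.toFun.exists_extend
  have hgU : ∀ u ∈ U, (u.1, g u.1) = u := by
    intro u hu
    rw [← toLinearPMap_graph_eq U hU', LinearPMap.mem_graph_iff] at hu
    obtain ⟨x, hx, hxu⟩ := hu
    rw [← hx]
    exact Prod.ext hx ((LinearMap.congr_fun hg x).trans hxu)
  refine ⟨g, le_antisymm (fun u hu ↦ ⟨u.1, ⟨u, hu, rfl⟩, hgU u hu⟩) ?_⟩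
  rintro _ ⟨_, ⟨u, hu, rfl⟩, rfl⟩
  rwa [← hgU u hu] at hu

theorem exists_submodule_finrank_eq {n : ℕ} (hn : n ≤ finrank K V) :
    ∃ S : Submodule K V, finrank K S = n := by
  obtain ⟨s, hcard, hs⟩ := exists_finset_linearIndependent_of_le_finrank hn
  exact ⟨span K s, (finrank_span_finset_eq_card hs).trans hcard⟩

theorem finrank_submodule_prod (S : Submodule K V) (T : Submodule K W) [FiniteDimensional K S]
    [FiniteDimensional K T] : finrank K (S.prod T) = finrank K S + finrank K T := by
  have hrange : LinearMap.range (S.subtype.prodMap T.subtype) = S.prod T := by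
    rw [LinearMap.range_prodMap, range_subtype, range_subtype]
  rw [← hrange, LinearMap.finrank_range_of_inj (S.subtype_injective.prodMap T.subtype_injective),
    finrank_prod]

theorem finrank_comap_mkQ (E : Submodule K V) [FiniteDimensional K E] (S : Submodule K (V ⧸ E))
    [FiniteDimensional K S] : finrank K (S.comap E.mkQ) = finrank K S + finrank K E := by
  have : FiniteDimensional K E.mkQ.ker := by rwa [ker_mkQ]
  have h := (E.mkQ.domRestrict (S.comap E.mkQ)).finrank_range_add_finrank_ker
  rw [LinearMap.range_domRestrict, map_comap_eq_of_surjective E.mkQ_surjective,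
    LinearMap.ker_domRestrict, ker_mkQ] at h
  rw [← h, ← submoduleOf, (submoduleOfEquivOfLe (le_comap_mkQ E S)).finrank_eq]

theorem IsMonochromatic.comap_mkQ {E : Submodule K V} [FiniteDimensional K E]
    {c : Submodule K V → κ} {k : ℕ} {i : κ} {S : Submodule K (V ⧸ E)} [FiniteDimensional K S]
    (hS : IsMonochromatic (fun T ↦ c (T.comap E.mkQ)) k i S) {U : Submodule K V} (hEU : E ≤ U)
    (hUS : U ≤ S.comap E.mkQ) (hUk : finrank K U - finrank K E = k) : c U = i := by
  have hmap : U.map E.mkQ ≤ S := map_le_iff_le_comap.mpr hUS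
  have : FiniteDimensional K (U.map E.mkQ) := finiteDimensional_of_le hmap
  have hU : (U.map E.mkQ).comap E.mkQ = U := by rw [comap_map_mkQ, sup_eq_right.mpr hEU]
  have hdim := finrank_comap_mkQ E (U.map E.mkQ)
  rw [hU] at hdim
  rw [← hU]
  exact hS _ hmap (by omega)

theorem IsGraphInvariant.isMonochromatic_prod_top [FiniteDimensional K V]
    {c : Submodule K (V × K) → κ} (hc : IsGraphInvariant c) {k : ℕ} {i : κ} {S : Submodule K V}
    (hprod : IsMonochromatic (fun T ↦ c (T.prod ⊤)) k i S)
    (hinl : IsMonochromatic (fun T ↦ c (T.map (LinearMap.inl K V K))) (k + 1) i S) :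
    IsMonochromatic c (k + 1) i (S.prod ⊤) := by
  intro U hUS hUk
  have hT : U.map (LinearMap.fst K V K) ≤ S := by
    rintro _ ⟨u, hu, rfl⟩
    exact (hUS hu).1
  by_cases hline : (⊥ : Submodule K V).prod ⊤ ≤ U
  · rw [← map_fst_prod_top_of_le hline] at hUk ⊢
    rw [finrank_submodule_prod, finrank_top, finrank_self] at hUk
    exact hprod _ hT (by omega)
  · have hzero (y : K) (hy : (0, y) ∈ U) : y = 0 := by
      by_contra hy0
      refine hline fun u hu ↦ ?_
      have hu0 : u.1 = 0 := hu.1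
      rw [show u = (u.2 * y⁻¹) • (0, y) by ext <;> simp [hu0, hy0]]
      exact U.smul_mem _ hy
    obtain ⟨g, hg⟩ := exists_eq_map_id_prod hzero
    have hinj : Function.Injective (LinearMap.id.prod g) := fun x y h ↦ congrArg Prod.fst h
    rw [hg, finrank_map_of_injective hinj] at hUk
    rw [hg, hc]
    exact hinl _ hT hUk

theorem ramseyArrow_zero [FiniteDimensional K V] {f : κ → ℕ} (hf : ∀ i, f i ≤ finrank K V) :
    RamseyArrow K V 0 f := by
  intro c
  obtain ⟨S, hS⟩ := exists_submodule_finrank_eq (hf (c ⊥))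
  exact ⟨c ⊥, S, hS, fun U _ hU ↦ by rw [Submodule.finrank_eq_zero.mp hU]⟩

theorem ramseyArrow_of_eq_zero {k : ℕ} (hk : k ≠ 0) {f : κ → ℕ} {i : κ} (hi : f i = 0) :
    RamseyArrow K V k f := by
  refine fun c ↦ ⟨i, ⊥, by rw [finrank_bot, hi], fun U hU hUk ↦ absurd ?_ hk⟩
  rw [← hUk, le_bot_iff.mp hU, finrank_bot]

theorem RamseyArrow.of_finrank_le [FiniteDimensional K V] [FiniteDimensional K W] {k : ℕ}
    {f : κ → ℕ} (h : RamseyArrow K V k f) (hVW : finrank K V ≤ finrank K W) :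
    RamseyArrow K W k f :=
  let ⟨_, hφ⟩ := finrank_le_iff_exists_linearMap.mp hVW
  h.of_injective hφ

theorem IsGraphInvariant.exists_isMonochromatic [DecidableEq κ] [FiniteDimensional K V]
    {c : Submodule K (V × K) → κ} (hc : IsGraphInvariant c) {k m : ℕ} {f : κ → ℕ}
    (hf : ∀ i, f i ≠ 0) (hprod : RamseyArrow K V k fun _ : κ ↦ m)
    (hinl : ∀ i, RamseyArrow K (Fin m → K) (k + 1) (Function.update f i (f i - 1))) :
    ∃ i, ∃ S : Submodule K (V × K), finrank K S = f i ∧ IsMonochromatic c (k + 1) i S := by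
  obtain ⟨i, B, hBm, hB⟩ := hprod fun T ↦ c (T.prod ⊤)
  let e : (Fin m → K) ≃ₗ[K] B := LinearEquiv.ofFinrankEq _ _ (by rw [finrank_fin_fun, hBm])
  obtain ⟨j, S, hSB, hSf, hS⟩ := (hinl i).exists_le_range (φ := B.subtype ∘ₗ e.toLinearMap)
    (B.subtype_injective.comp e.injective) fun T ↦ c (T.map (LinearMap.inl K V K))
  obtain rfl | hji := eq_or_ne j i
  · have hSB' : S ≤ B := hSB.trans ((LinearMap.range_comp_le_range _ _).trans B.range_subtype.le)
    refine ⟨j, S.prod ⊤, ?_, hc.isMonochromatic_prod_top (fun T hT ↦ hB T (hT.trans hSB')) hS⟩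
    rw [finrank_submodule_prod, hSf, Function.update_self, finrank_top, finrank_self,
      Nat.sub_one_add_one (hf j)]
  · refine ⟨j, S.map (LinearMap.inl K V K), ?_, hS.map LinearMap.inl_injective⟩
    rw [finrank_map_of_injective LinearMap.inl_injective, hSf, Function.update_of_ne hji]

theorem exists_ramseyArrow_succ [Finite K] [Finite κ] [DecidableEq κ] [Finite V] {k m : ℕ}
    {f : κ → ℕ} (hf : ∀ i, f i ≠ 0) (hprod : RamseyArrow K V k fun _ : κ ↦ m)
    (hinl : ∀ i, RamseyArrow K (Fin m → K) (k + 1) (Function.update f i (f i - 1))) :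
    ∃ n, RamseyArrow K (Fin n → K) (k + 1) f := by
  obtain ⟨ι, _, hι⟩ := exists_isGraphInvariant K V κ
  have harrow : RamseyArrow K (V × (ι → K)) (k + 1) f := fun c ↦ by
    obtain ⟨φ, hφ, hc⟩ := hι c
    obtain ⟨i, S, hSf, hS⟩ := hc.exists_isMonochromatic hf hprod hinl
    exact ⟨i, S.map φ, (finrank_map_of_injective hφ S).trans hSf, hS.map hφ⟩
  exact ⟨_, harrow.of_finrank_le (finrank_fin_fun K).ge⟩

theorem exists_ramseyArrow (K : Type*) [DivisionRing K] [Finite K] {κ : Type*} [Finite κ] (k : ℕ)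
    (f : κ → ℕ) :
    ∃ n, RamseyArrow K (Fin n → K) k f := by
  classical
  have := Fintype.ofFinite κ
  induction k generalizing f with
  | zero =>
    refine ⟨∑ i, f i, ramseyArrow_zero fun i ↦ ?_⟩
    rw [finrank_fin_fun]
    exact Finset.single_le_sum_of_canonicallyOrdered (Finset.mem_univ i)
  | succ k ihk =>
    induction f using WellFoundedLT.induction with
    | ind f ihf =>
    by_cases! hf : ∃ i, f i = 0
    · obtain ⟨i, hi⟩ := hf
      exact ⟨0, ramseyArrow_of_eq_zero k.succ_ne_zero hi⟩
    have hupdate (i : κ) : Function.update f i (f i - 1) < f :=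
      update_lt_self_iff.mpr (Nat.sub_one_lt (hf i))
    choose m hm using fun i ↦ ihf _ (hupdate i)
    obtain ⟨d, hd⟩ := ihk fun _ ↦ ∑ i, m i
    exact exists_ramseyArrow_succ hf hd fun i ↦
      (hm i).of_finrank_le <| by
        simpa only [finrank_fin_fun] using
          Finset.single_le_sum_of_canonicallyOrdered (Finset.mem_univ i)

theorem exists_injective_quotient (hV : ¬ FiniteDimensional K V) (E : Submodule K V)
    [FiniteDimensional K E] (n : ℕ) :
    ∃ φ : (Fin n → K) →ₗ[K] V ⧸ E, Function.Injective φ := by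
  have hquot : ¬ FiniteDimensional K (V ⧸ E) := fun _ ↦ hV (.of_submodule_quotient E)
  rw [FiniteDimensional, ← rank_lt_aleph0_iff, not_lt] at hquot
  exact le_rank_iff_exists_linearMap.mp (Cardinal.natCast_le_aleph0.trans hquot)

theorem ramsey_subspaces_containing_A1_general [Finite K] [Finite κ] (hV : ¬ FiniteDimensional K V)
    (E : Submodule K V) [FiniteDimensional K E] (a : ℕ) {b : ℕ} (hEb : finrank K E ≤ b) :
    ∃ C : Submodule K V, FiniteDimensional K C ∧ E ≤ C ∧
      ∀ ξ : Submodule K V → κ, ∃ B : Submodule K V, E ≤ B ∧ B ≤ C ∧ finrank K B = b ∧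
        ∀ U U' : Submodule K V, E ≤ U → U ≤ B → finrank K U = a →
          E ≤ U' → U' ≤ B → finrank K U' = a → ξ U = ξ U' := by
  obtain ⟨n, hn⟩ := exists_ramseyArrow K (a - finrank K E) fun _ : κ ↦ b - finrank K E
  obtain ⟨φ, hφ⟩ := exists_injective_quotient hV E n
  have : FiniteDimensional K E.mkQ.ker := by rwa [ker_mkQ]
  refine ⟨φ.range.comap E.mkQ, inferInstance, le_comap_mkQ _ _, fun ξ ↦ ?_⟩
  obtain ⟨i, S, hSφ, hSb, hS⟩ := hn.exists_le_range hφ fun T ↦ ξ (T.comap E.mkQ)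
  have : FiniteDimensional K S := finiteDimensional_of_le hSφ
  have hmono (U : Submodule K V) (hEU : E ≤ U) (hUS : U ≤ S.comap E.mkQ)
      (hUa : finrank K U = a) : ξ U = i :=
    hS.comap_mkQ hEU hUS (by rw [hUa])
  have hdim : finrank K (S.comap E.mkQ) = b := by
    rw [finrank_comap_mkQ, hSb, Nat.sub_add_cancel hEb]
  exact ⟨S.comap E.mkQ, le_comap_mkQ _ _, comap_mono hSφ, hdim,
    fun U U' hEU hUS hUa hEU' hUS' hUa' ↦
      (hmono U hEU hUS hUa).trans (hmono U' hEU' hUS' hUa').symm⟩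

end DivisionRing

/-- For a countably infinite dimensional vector space `V` over `GF(2)` and a finite
dimensional subspace `A1 ≤ V`, the family of finite dimensional subspaces of `V`
containing `A1` has the Ramsey property: for `A1 ≤ A ≤ B` and any number of colors `r`
there is a finite dimensional `C` with `A1 ≤ C` such that every `r`-coloring of the
subspaces `U` with `A1 ≤ U ≤ C`, `dim U = dim A` is constant on those contained in some
`B'` with `A1 ≤ B' ≤ C` and `dim B' = dim B`. -/
theorem ramsey_subspaces_containing_A1
    (V : Type*) [AddCommGroup V] [Module (ZMod 2) V]
    (hrank : Module.rank (ZMod 2) V = Cardinal.aleph0)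
    (A1 A B : Submodule (ZMod 2) V)
    (hA1fin : FiniteDimensional (ZMod 2) A1)
    (hAfin : FiniteDimensional (ZMod 2) A)
    (hBfin : FiniteDimensional (ZMod 2) B)
    (hA1A : A1 ≤ A) (hAB : A ≤ B)
    (r : ℕ) :
    ∃ C : Submodule (ZMod 2) V,
      FiniteDimensional (ZMod 2) C ∧ A1 ≤ C ∧
      ∀ ξ : Submodule (ZMod 2) V → Fin r,
        ∃ B' : Submodule (ZMod 2) V,
          A1 ≤ B' ∧ B' ≤ C ∧ finrank (ZMod 2) B' = finrank (ZMod 2) B ∧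
          ∀ U U' : Submodule (ZMod 2) V,
            A1 ≤ U → U ≤ B' → finrank (ZMod 2) U = finrank (ZMod 2) A →
            A1 ≤ U' → U' ≤ B' → finrank (ZMod 2) U' = finrank (ZMod 2) A →
            ξ U = ξ U' :=
  ramsey_subspaces_containing_A1_general (rank_lt_aleph0_iff.not.mp hrank.not_lt) A1
    (finrank (ZMod 2) A) (finrank_mono (hA1A.trans hAB))
end
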